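/- arXiv:1703.10381 — 4 statements merged into one kernel-verified Lean document; each statement's English description precedes it below -/
import Mathlib

section
/- Let z : ℕ → ℝᵖ be a p-variate time series sample with sample length T ≥ 1, let U be an orthogonal p×p matrix, and set x_t := U z_t for all t. Then for every lag τ ∈ ℕ the gFOBI matrix satisfies B_τ(x) = U·B_τ(z)·Uᵀ; consequently, if B_τ(z) is diagonal, then Uᵀ·B_τ(x)·U is diagonal. -/
/-!
Each summand `z_t z_{t+τ}ᵀ z_{t+τ} z_tᵀ` is `‖z_{t+τ}‖²` times the rank-one matrix `z_t z_tᵀ`.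
Replacing `z` by `U z` keeps the scalar, since `Uᵀ U = 1`, and conjugates the rank-one matrix into
`U (z_t z_tᵀ) Uᵀ`; the identity for `B_τ` follows by linearity. Conjugating back with `Uᵀ` then
recovers `B_τ(z)` itself, which gives the statement on diagonality.
-/

open Matrix Finset

/-- The lag-`τ` gFOBI matrix of a `p`-variate time series sample `z` with sample length `T`:
`B_τ(z) = (1/T) ∑_{t=0}^{T-1} z_t z_{t+τ}ᵀ z_{t+τ} z_tᵀ`. -/
noncomputable def gfobiMat {p : ℕ} (T τ : ℕ) (z : ℕ → Fin p → ℝ) : Matrix (Fin p) (Fin p) ℝ :=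
  (T : ℝ)⁻¹ • ∑ t ∈ Finset.range T,
    vecMulVec (z t) (z (t + τ)) * vecMulVec (z (t + τ)) (z t)

/-- If `U` is orthogonal and `x_t = U z_t`, then `B_τ(x) = U B_τ(z) Uᵀ`;
consequently, if `B_τ(z)` is diagonal then `Uᵀ B_τ(x) U` is diagonal. -/
theorem gfobi_of_orthogonal_transform {p T : ℕ} (hT : 1 ≤ T) (z x : ℕ → Fin p → ℝ)
    (U : Matrix (Fin p) (Fin p) ℝ) (hU : Uᵀ * U = 1)
    (hx : ∀ t, x t = U.mulVec (z t)) (τ : ℕ) :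
    gfobiMat T τ x = U * gfobiMat T τ z * Uᵀ ∧
      ((gfobiMat T τ z).IsDiag → (Uᵀ * gfobiMat T τ x * U).IsDiag) := by
  have hB : gfobiMat T τ x = U * gfobiMat T τ z * Uᵀ := by
    unfold gfobiMat
    rw [mul_smul_comm, smul_mul_assoc, Finset.mul_sum, Finset.sum_mul]
    congr 1
    refine Finset.sum_congr rfl fun t _ => ?_
    -- orthogonality preserves the inner scalar `z_{t+τ}ᵀ z_{t+τ}`
    have hdot : ∀ v : Fin p → ℝ, U *ᵥ v ⬝ᵥ U *ᵥ v = v ⬝ᵥ v := fun v => by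
      rw [dotProduct_mulVec, ← mulVec_transpose, mulVec_mulVec, hU, one_mulVec]
    rw [hx, hx, vecMulVec_mul_vecMulVec, vecMulVec_mul_vecMulVec, hdot, mul_vecMulVec,
      vecMulVec_mul, vecMul_transpose, mulVec_smul]
  refine ⟨hB, fun h => ?_⟩
  have hconj : Uᵀ * gfobiMat T τ x * U = gfobiMat T τ z := by
    rw [hB]
    calc Uᵀ * (U * gfobiMat T τ z * Uᵀ) * U
        = (Uᵀ * U) * gfobiMat T τ z * (Uᵀ * U) := by simp only [Matrix.mul_assoc]
      _ = gfobiMat T τ z := by rw [hU, Matrix.one_mul, Matrix.mul_one]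
  rwa [hconj]
end

section
/- Let Z : ℕ → ℝ^{p₁×p₂} be a matrix-valued time series sample with sample length T ≥ 1 satisfying (1/T)·Σ_{t=0}^{T−1} (Z_t)_{ik}(Z_t)_{jl} = δ_{ij}δ_{kl} for all i, j ∈ {1,…,p₁} and k, l ∈ {1,…,p₂}, let Ω₁ ∈ ℝ^{p₁×p₁} and Ω₂ ∈ ℝ^{p₂×p₂}, and set X_t := Ω₁ Z_t Ω₂ᵀ. Then the mode-wise sample covariance matrices satisfy Σ¹_0(X) = (‖Ω₂‖_F²/p₂)·Ω₁Ω₁ᵀ and Σ²_0(X) = (‖Ω₁‖_F²/p₁)·Ω₂Ω₂ᵀ. -/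
/-!
Whiteness of the sample means that `∑ t, Z_t M Z_tᵀ = T tr(M) I` for every square matrix `M`
(`sum_mul_mul_transpose_of_white`). Since `X_t X_tᵀ = Ω₁ (Z_t (Ω₂ᵀ Ω₂) Z_tᵀ) Ω₁ᵀ` and
`tr(Ω₂ᵀ Ω₂) = ‖Ω₂‖_F²`, summing over `t` gives the mode-1 formula. The mode-2 formula is the mode-1
formula for the transposed series `X_tᵀ = Ω₂ Z_tᵀ Ω₁ᵀ`, because whiteness is invariant under
transposition.
-/

open Matrix Finset

/-- The mode-1 lag-`τ` covariance matrix `Σ¹_τ(Z) = (1/(p₂T)) ∑_{t=0}^{T-1} Z_t Z_{t+τ}ᵀ`. -/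
noncomputable def mode1cov {p₁ p₂ : ℕ} (T τ : ℕ) (Z : ℕ → Matrix (Fin p₁) (Fin p₂) ℝ) :
    Matrix (Fin p₁) (Fin p₁) ℝ :=
  ((p₂ : ℝ) * T)⁻¹ • ∑ t ∈ Finset.range T, Z t * (Z (t + τ))ᵀ

/-- The mode-2 lag-`τ` covariance matrix `Σ²_τ(Z) = (1/(p₁T)) ∑_{t=0}^{T-1} Z_tᵀ Z_{t+τ}`. -/
noncomputable def mode2cov {p₁ p₂ : ℕ} (T τ : ℕ) (Z : ℕ → Matrix (Fin p₁) (Fin p₂) ℝ) :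
    Matrix (Fin p₂) (Fin p₂) ℝ :=
  ((p₁ : ℝ) * T)⁻¹ • ∑ t ∈ Finset.range T, (Z t)ᵀ * Z (t + τ)

lemma sum_mul_mul_transpose_of_white {p₁ p₂ T : ℕ} (hT : 1 ≤ T)
    (Z : ℕ → Matrix (Fin p₁) (Fin p₂) ℝ)
    (hZ : ∀ (i j : Fin p₁) (k l : Fin p₂),
      (T : ℝ)⁻¹ * ∑ t ∈ Finset.range T, Z t i k * Z t j l =
        (if i = j then (1 : ℝ) else 0) * (if k = l then (1 : ℝ) else 0))
    (M : Matrix (Fin p₂) (Fin p₂) ℝ) :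
    ∑ t ∈ Finset.range T, Z t * M * (Z t)ᵀ = ((T : ℝ) * M.trace) • 1 := by
  have hT0 : (T : ℝ) ≠ 0 := by positivity
  have hsum : ∀ (i j : Fin p₁) (k l : Fin p₂), ∑ t ∈ Finset.range T, Z t i k * Z t j l =
      T * ((if i = j then (1 : ℝ) else 0) * (if k = l then (1 : ℝ) else 0)) := by
    intro i j k l
    rw [← hZ, mul_inv_cancel_left₀ hT0]
  ext i j
  calc (∑ t ∈ Finset.range T, Z t * M * (Z t)ᵀ) i j
      = ∑ t ∈ Finset.range T, ∑ l, ∑ k, M k l * (Z t i k * Z t j l) := by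
        simp only [Matrix.sum_apply, Matrix.mul_apply, Matrix.transpose_apply, Finset.sum_mul]
        refine Finset.sum_congr rfl fun t _ => Finset.sum_congr rfl fun l _ =>
          Finset.sum_congr rfl fun k _ => by ring
    _ = ∑ l, ∑ k, M k l * ∑ t ∈ Finset.range T, Z t i k * Z t j l := by
        rw [Finset.sum_comm]
        refine Finset.sum_congr rfl fun l _ => ?_
        rw [Finset.sum_comm]
        simp only [Finset.mul_sum]
    _ = (((T : ℝ) * M.trace) • (1 : Matrix (Fin p₁) (Fin p₁) ℝ)) i j := by
        simp only [hsum]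
        by_cases hij : i = j
        · simp [hij, Matrix.trace, Finset.mul_sum, mul_comm]
        · simp [hij]

lemma mode1cov_of_mixed_series {p₁ p₂ T : ℕ} (hT : 1 ≤ T)
    (Z X : ℕ → Matrix (Fin p₁) (Fin p₂) ℝ)
    (hZ : ∀ (i j : Fin p₁) (k l : Fin p₂),
      (T : ℝ)⁻¹ * ∑ t ∈ Finset.range T, Z t i k * Z t j l =
        (if i = j then (1 : ℝ) else 0) * (if k = l then (1 : ℝ) else 0))
    (Ω₁ : Matrix (Fin p₁) (Fin p₁) ℝ) (Ω₂ : Matrix (Fin p₂) (Fin p₂) ℝ)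
    (hX : ∀ t, X t = Ω₁ * Z t * Ω₂ᵀ) :
    mode1cov T 0 X = ((∑ k, ∑ l, Ω₂ k l ^ 2) / p₂) • (Ω₁ * Ω₁ᵀ) := by
  have hT0 : (T : ℝ) ≠ 0 := by positivity
  have htr : (Ω₂ᵀ * Ω₂).trace = ∑ k, ∑ l, Ω₂ k l ^ 2 := by
    rw [Finset.sum_comm]
    simp [Matrix.trace, Matrix.mul_apply, sq]
  have hfac : ∑ t ∈ Finset.range T, X t * (X t)ᵀ =
      Ω₁ * (∑ t ∈ Finset.range T, Z t * (Ω₂ᵀ * Ω₂) * (Z t)ᵀ) * Ω₁ᵀ := by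
    rw [Finset.mul_sum, Finset.sum_mul]
    refine Finset.sum_congr rfl fun t _ => ?_
    simp [hX, Matrix.transpose_mul, Matrix.mul_assoc]
  simp only [mode1cov, add_zero]
  rw [hfac, sum_mul_mul_transpose_of_white hT Z hZ, htr, Matrix.mul_smul, Matrix.mul_one,
    Matrix.smul_mul, smul_smul]
  congr 1
  -- With `p₂ = 0` allowed, only `T` may be cancelled.
  rw [mul_inv, mul_assoc, inv_mul_cancel_left₀ hT0, div_eq_inv_mul]

/-- If the vectorization of `Z` has identity sample covariance and
`X_t = Ω₁ Z_t Ω₂ᵀ`, then `Σ¹_0(X) = (‖Ω₂‖_F²/p₂) Ω₁Ω₁ᵀ` and `Σ²_0(X) = (‖Ω₁‖_F²/p₁) Ω₂Ω₂ᵀ`,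
where `‖Ω‖_F²` is the sum of the squared entries. -/
theorem modewise_cov_of_mixed_series {p₁ p₂ T : ℕ} (hT : 1 ≤ T)
    (Z X : ℕ → Matrix (Fin p₁) (Fin p₂) ℝ)
    (hZ : ∀ (i j : Fin p₁) (k l : Fin p₂),
      (T : ℝ)⁻¹ * ∑ t ∈ Finset.range T, Z t i k * Z t j l =
        (if i = j then (1 : ℝ) else 0) * (if k = l then (1 : ℝ) else 0))
    (Ω₁ : Matrix (Fin p₁) (Fin p₁) ℝ) (Ω₂ : Matrix (Fin p₂) (Fin p₂) ℝ)
    (hX : ∀ t, X t = Ω₁ * Z t * Ω₂ᵀ) :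
    mode1cov T 0 X = ((∑ k, ∑ l, Ω₂ k l ^ 2) / p₂) • (Ω₁ * Ω₁ᵀ) ∧
    mode2cov T 0 X = ((∑ i, ∑ j, Ω₁ i j ^ 2) / p₁) • (Ω₂ * Ω₂ᵀ) := by
  refine ⟨mode1cov_of_mixed_series hT Z X hZ Ω₁ Ω₂ hX, ?_⟩
  exact mode1cov_of_mixed_series hT (fun t => (Z t)ᵀ) (fun t => (X t)ᵀ)
    (fun i j k l => by simpa only [Matrix.transpose_apply, mul_comm] using hZ k l i j) Ω₂ Ω₁
    (fun t => by simp [hX, Matrix.transpose_mul, Matrix.mul_assoc])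
end

section
/- (Theorem 2(ii), TgFOBI, for matrix-valued series, mode 1.) Let Z : ℕ → ℝ^{p₁×p₂} be a matrix-valued time series sample with sample length T ≥ 1, let U₁ ∈ ℝ^{p₁×p₁} and U₂ ∈ ℝ^{p₂×p₂} be orthogonal matrices, let c ∈ ℝ, and set X_t := c · U₁ Z_t U₂ᵀ for all t. Then for every lag τ ∈ ℕ one has B¹_τ(X) = c⁴ · U₁ · B¹_τ(Z) · U₁ᵀ; consequently, if B¹_τ(Z) is diagonal, then U₁ᵀ · B¹_τ(X) · U₁ is diagonal. -/
/-!
In `X_t X_{t+τ}ᵀ X_{t+τ} X_tᵀ` every interior orthogonal factor meets its own transpose and cancels,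
so each summand of `B¹_τ(X)` is `c⁴` times the `U₁`-conjugate of the corresponding summand for `Z`.
Conjugation is linear, hence commutes with the average over `t`. Conjugating back gives
`U₁ᵀ B¹_τ(X) U₁ = c⁴ B¹_τ(Z)`, a scalar multiple of a diagonal matrix.
-/

open Matrix Finset

/-- The mode-1 lag-`τ` gFOBI matrix `B¹_τ(Z) = (1/(p₂T)) ∑_{t=0}^{T-1} Z_t Z_{t+τ}ᵀ Z_{t+τ} Z_tᵀ`. -/
noncomputable def mode1gfobi {p₁ p₂ : ℕ} (T τ : ℕ) (Z : ℕ → Matrix (Fin p₁) (Fin p₂) ℝ) :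
    Matrix (Fin p₁) (Fin p₁) ℝ :=
  ((p₂ : ℝ) * T)⁻¹ • ∑ t ∈ Finset.range T, Z t * (Z (t + τ))ᵀ * Z (t + τ) * (Z t)ᵀ

/-- Theorem 2(ii), TgFOBI, mode 1. If `U₁, U₂` are orthogonal and
`X_t = c ⬝ U₁ Z_t U₂ᵀ`, then `B¹_τ(X) = c⁴ ⬝ U₁ B¹_τ(Z) U₁ᵀ`; consequently, if `B¹_τ(Z)` is
diagonal, then `U₁ᵀ B¹_τ(X) U₁` is diagonal. -/
theorem mode1gfobi_of_orthogonal_transform {p₁ p₂ T : ℕ} (hT : 1 ≤ T)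
    (Z X : ℕ → Matrix (Fin p₁) (Fin p₂) ℝ)
    (U₁ : Matrix (Fin p₁) (Fin p₁) ℝ) (U₂ : Matrix (Fin p₂) (Fin p₂) ℝ)
    (hU₁ : U₁ᵀ * U₁ = 1) (hU₂ : U₂ᵀ * U₂ = 1) (c : ℝ)
    (hX : ∀ t, X t = c • (U₁ * Z t * U₂ᵀ)) (τ : ℕ) :
    mode1gfobi T τ X = (c ^ 4) • (U₁ * mode1gfobi T τ Z * U₁ᵀ) ∧
      ((mode1gfobi T τ Z).IsDiag → (U₁ᵀ * mode1gfobi T τ X * U₁).IsDiag) := by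
  have hterm : ∀ t, X t * (X (t + τ))ᵀ * X (t + τ) * (X t)ᵀ =
      c ^ 4 • (U₁ * (Z t * (Z (t + τ))ᵀ * Z (t + τ) * (Z t)ᵀ) * U₁ᵀ) := by
    intro t
    have h₁ : ∀ M : Matrix (Fin p₁) (Fin p₂) ℝ, U₁ᵀ * (U₁ * M) = M := fun M => by
      rw [← Matrix.mul_assoc, hU₁, Matrix.one_mul]
    have h₂ : ∀ M : Matrix (Fin p₂) (Fin p₁) ℝ, U₂ᵀ * (U₂ * M) = M := fun M => by
      rw [← Matrix.mul_assoc, hU₂, Matrix.one_mul]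
    simp only [hX, transpose_smul, transpose_mul, transpose_transpose, Matrix.smul_mul,
      Matrix.mul_smul, smul_smul, Matrix.mul_assoc, h₁, h₂]
    congr 1
    ring
  have hB : mode1gfobi T τ X = (c ^ 4) • (U₁ * mode1gfobi T τ Z * U₁ᵀ) := by
    simp only [mode1gfobi, hterm]
    rw [← Finset.smul_sum, ← Matrix.sum_mul, ← Matrix.mul_sum, Matrix.mul_smul,
      Matrix.smul_mul, smul_comm]
  refine ⟨hB, fun hD => ?_⟩
  have hconj : U₁ᵀ * mode1gfobi T τ X * U₁ = c ^ 4 • mode1gfobi T τ Z := by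
    rw [hB, Matrix.mul_smul, Matrix.smul_mul, Matrix.mul_assoc, Matrix.mul_assoc, hU₁,
      Matrix.mul_one, ← Matrix.mul_assoc, hU₁, Matrix.one_mul]
  rw [hconj]
  exact hD.smul _
end

section
/- Let Z : ℕ → ℝ^{p₁×p₂} be a matrix-valued time series sample with sample length T ≥ 1, let U₁ ∈ ℝ^{p₁×p₁} and U₂ ∈ ℝ^{p₂×p₂} be orthogonal matrices, let c ∈ ℝ, and set X_t := c · U₁ Z_t U₂ᵀ for all t. Then for all lags τ₁, τ₂, τ₃, τ₄ ∈ ℕ and all indices i, j ∈ {1,…,p₁} one has B¹_{τ₁τ₂τ₃τ₄ij}(X) = c⁴ · Σ_{k=1}^{p₁} Σ_{l=1}^{p₁} (U₁)_{ik}(U₁)_{jl} · U₁ · B¹_{τ₁τ₂τ₃τ₄kl}(Z) · U₁ᵀ. -/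
/-!
Orthogonality of `U₂` gives `X_s X_tᵀ = c² U₁ (Z_s Z_tᵀ) U₁ᵀ` (`transform_mul_transpose`).
Applied to both factors of each summand, this yields `c⁴`; the scalar factor is expanded entrywise
as a bilinear sum over `k, l` (`conj_apply_eq_sum`), and linearity moves the time average inside
the conjugation by `U₁`.
-/

open Matrix Finset

/-- The mode-1 fourth-moment matrix
`B¹_{τ₁τ₂τ₃τ₄ij}(Z) = (1/(p₂T)) ∑_{t=0}^{T-1} (Z_{t+τ₁} Z_{t+τ₂}ᵀ)_{ij} ⬝ Z_{t+τ₃} Z_{t+τ₄}ᵀ`. -/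
noncomputable def mode1B {p₁ p₂ : ℕ} (T τ₁ τ₂ τ₃ τ₄ : ℕ) (i j : Fin p₁)
    (Z : ℕ → Matrix (Fin p₁) (Fin p₂) ℝ) : Matrix (Fin p₁) (Fin p₁) ℝ :=
  ((p₂ : ℝ) * T)⁻¹ • ∑ t ∈ Finset.range T,
    ((Z (t + τ₁) * (Z (t + τ₂))ᵀ) i j) • (Z (t + τ₃) * (Z (t + τ₄))ᵀ)

/-- Orthogonality of `V` cancels the right factors, so the cross product `A Bᵀ` is conjugated
by `U` and scaled by `c²`. -/
lemma transform_mul_transpose {p₁ p₂ : ℕ} (A B : Matrix (Fin p₁) (Fin p₂) ℝ)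
    (U : Matrix (Fin p₁) (Fin p₁) ℝ) (V : Matrix (Fin p₂) (Fin p₂) ℝ)
    (hV : Vᵀ * V = 1) (c : ℝ) :
    (c • (U * A * Vᵀ)) * (c • (U * B * Vᵀ))ᵀ = c ^ 2 • (U * (A * Bᵀ) * Uᵀ) := by
  have h : (U * A * Vᵀ) * (U * B * Vᵀ)ᵀ = U * (A * Bᵀ) * Uᵀ := by
    calc (U * A * Vᵀ) * (U * B * Vᵀ)ᵀ = U * A * (Vᵀ * V) * Bᵀ * Uᵀ := by
          simp only [transpose_mul, transpose_transpose, Matrix.mul_assoc]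
      _ = U * (A * Bᵀ) * Uᵀ := by
          simp only [hV, Matrix.mul_one, Matrix.mul_assoc]
  rw [transpose_smul, Matrix.smul_mul, Matrix.mul_smul, smul_smul, h, sq]

lemma conj_apply_eq_sum {p : ℕ} (U M : Matrix (Fin p) (Fin p) ℝ) (i j : Fin p) :
    (U * M * Uᵀ) i j = ∑ k, ∑ l, U i k * U j l * M k l := by
  simp only [Matrix.mul_apply, transpose_apply, Finset.sum_mul]
  rw [Finset.sum_comm]
  exact Finset.sum_congr rfl fun k _ => Finset.sum_congr rfl fun l _ => by ring

/-- If `U₁, U₂` are orthogonal and `X_t = c ⬝ U₁ Z_t U₂ᵀ`, then for all lags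
`τ₁, τ₂, τ₃, τ₄` and indices `i, j`:
`B¹_{τ₁τ₂τ₃τ₄ij}(X) = c⁴ ⬝ ∑_k ∑_l (U₁)_{ik} (U₁)_{jl} ⬝ U₁ B¹_{τ₁τ₂τ₃τ₄kl}(Z) U₁ᵀ`. -/
theorem mode1B_of_orthogonal_transform {p₁ p₂ T : ℕ} (hT : 1 ≤ T)
    (Z X : ℕ → Matrix (Fin p₁) (Fin p₂) ℝ)
    (U₁ : Matrix (Fin p₁) (Fin p₁) ℝ) (U₂ : Matrix (Fin p₂) (Fin p₂) ℝ)
    (hU₁ : U₁ᵀ * U₁ = 1) (hU₂ : U₂ᵀ * U₂ = 1) (c : ℝ)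
    (hX : ∀ t, X t = c • (U₁ * Z t * U₂ᵀ)) (τ₁ τ₂ τ₃ τ₄ : ℕ) (i j : Fin p₁) :
    mode1B T τ₁ τ₂ τ₃ τ₄ i j X =
      (c ^ 4) • ∑ k, ∑ l, (U₁ i k * U₁ j l) • (U₁ * mode1B T τ₁ τ₂ τ₃ τ₄ k l Z * U₁ᵀ) := by
  have hprod (s t : ℕ) : X s * (X t)ᵀ = c ^ 2 • (U₁ * (Z s * (Z t)ᵀ) * U₁ᵀ) := by
    rw [hX, hX, transform_mul_transpose _ _ _ _ hU₂]
  simp only [mode1B, hprod, Matrix.smul_apply, conj_apply_eq_sum, Matrix.mul_smul,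
    Matrix.smul_mul, Finset.smul_sum, smul_smul, smul_eq_mul,
    Finset.sum_smul, Finset.mul_sum, Finset.sum_mul]
  -- Both sides are now triple sums over `t, k, l`; the time sum is moved innermost.
  rw [Finset.sum_comm]
  refine Finset.sum_congr rfl fun k _ => ?_
  rw [Finset.sum_comm]
  refine Finset.sum_congr rfl fun l _ => Finset.sum_congr rfl fun t _ => ?_
  congr 1
  ring
end
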